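/- Every planar graph G has a set X of vertices with |X| < |V(G)|/2 such that G is L-colourable for every list assignment L giving each vertex of X five permissible colours and each other vertex four permissible colours. -/

import Mathlib

open MvPolynomial Finset

/- The graph polynomial `P_G = ∏_{uv ∈ E(G), u < v} (x_v - x_u)`. -/
open scoped Classical in
noncomputable def graphPoly {V : Type*} [Fintype V] [LinearOrder V]
    (G : SimpleGraph V) : MvPolynomial V ℝ :=
  ∏ p ∈ Finset.univ.filter (fun p : V × V => G.Adj p.1 p.2 ∧ p.1 < p.2),
    (X p.2 - X p.1)

/- The signed graph polynomial `P_{G,σ} = ∏_{uv ∈ E(G), u < v} (x_v - σ(uv)·x_u)`. -/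
open scoped Classical in
noncomputable def signedGraphPoly {V : Type*} [Fintype V] [LinearOrder V]
    (G : SimpleGraph V) (σ : Sym2 V → ℤ) : MvPolynomial V ℤ :=
  ∏ p ∈ Finset.univ.filter (fun p : V × V => G.Adj p.1 p.2 ∧ p.1 < p.2),
    (X p.2 - C (σ s(p.1, p.2)) * X p.1)

/- `H` is a minor of `G`: branch sets. -/
def SimpleGraph.IsMinor {W V : Type*} (H : SimpleGraph W) (G : SimpleGraph V) : Prop :=
  ∃ f : W → Set V,
    (∀ w, (G.induce (f w)).Connected) ∧
    (∀ w₁ w₂, w₁ ≠ w₂ → Disjoint (f w₁) (f w₂)) ∧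
    (∀ w₁ w₂, H.Adj w₁ w₂ → ∃ v₁ ∈ f w₁, ∃ v₂ ∈ f w₂, G.Adj v₁ v₂)

/- A graph is planar iff it has no `K₅` and no `K₃,₃` minor (Wagner's theorem). -/
def SimpleGraph.IsPlanar {V : Type*} (G : SimpleGraph V) : Prop :=
  ¬ SimpleGraph.IsMinor (completeGraph (Fin 5)) G ∧
  ¬ SimpleGraph.IsMinor (completeBipartiteGraph (Fin 3) (Fin 3)) G

/- Following Thomassen's proof that planar graphs are 5-choosable, vertices are deleted one at a
time from the boundary, and the graph is cut along an edge whenever that edge separates it. Instead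
of colours, the induction keeps a monomial with nonzero coefficient in the graph polynomial; by the
Combinatorial Nullstellensatz, exponents at most `3` and `4` allow lists of size `4` and `5`.

Putting back a boundary vertex `v` with two boundary neighbours may push a neighbour of `v` off the
boundary to exponent `4`, but then `v` itself has exponent at most `1`. So each vertex of exponent
`4` can be charged to a vertex of its own, and the first vertex deleted is never charged.

Planarity only enters in showing that a boundary vertex with three boundary neighbours is the end
of a separating edge to one of them: contracting the deleted vertices gives a vertex adjacent to the
whole boundary, so otherwise there is a `K₅` or `K₃,₃` minor. -/

section Minors

variable {V : Type*} {G : SimpleGraph V} {S T K C D : Set V} {a b c : V}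

/-- Some edge of `G` joins the vertex sets `S` and `T`. This is the adjacency of branch sets in
`SimpleGraph.IsMinor`. -/
def SetAdj (G : SimpleGraph V) (S T : Set V) : Prop :=
  ∃ s ∈ S, ∃ t ∈ T, G.Adj s t

lemma SetAdj.symm (h : SetAdj G S T) : SetAdj G T S := by
  obtain ⟨s, hs, t, ht, hst⟩ := h
  exact ⟨t, ht, s, hs, hst.symm⟩

lemma SetAdj.mono (h : SetAdj G S T) (hS : S ⊆ C) (hT : T ⊆ D) : SetAdj G C D := by
  obtain ⟨s, hs, t, ht, hst⟩ := h
  exact ⟨s, hS hs, t, hT ht, hst⟩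

lemma SetAdj.connected_union (h : SetAdj G S T) (hS : (G.induce S).Preconnected)
    (hT : (G.induce T).Preconnected) : (G.induce (S ∪ T)).Connected := by
  obtain ⟨s, hs, t, ht, hst⟩ := h
  exact SimpleGraph.connected_induce_union hS hT hs ht hst

lemma connected_induce_singleton (G : SimpleGraph V) (a : V) : (G.induce {a}).Connected := by
  simp

/-- The sets `S i` are the branch sets of a complete minor of `G` on `n` vertices. -/
structure IsCliqueModel (G : SimpleGraph V) {n : ℕ} (S : Fin n → Set V) : Prop where
  connected : ∀ i, (G.induce (S i)).Connected
  disjoint : Pairwise fun i j => Disjoint (S i) (S j)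
  setAdj : Pairwise fun i j => SetAdj G (S i) (S j)

lemma IsCliqueModel.cons {n : ℕ} {S : Fin n → Set V} (hS : IsCliqueModel G S)
    (hK : (G.induce K).Connected) (hdisj : ∀ i, Disjoint K (S i)) (hadj : ∀ i, SetAdj G K (S i)) :
    IsCliqueModel G (Fin.cons K S : Fin (n + 1) → Set V) where
  connected := Fin.cases hK hS.connected
  disjoint i j hij := by
    cases i using Fin.cases <;> cases j using Fin.cases
    · exact absurd rfl hij
    · exact hdisj _
    · exact (hdisj _).symm
    · exact hS.disjoint fun h => hij (congrArg Fin.succ h)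
  setAdj i j hij := by
    cases i using Fin.cases <;> cases j using Fin.cases
    · exact absurd rfl hij
    · exact hadj _
    · exact (hadj _).symm
    · exact hS.setAdj fun h => hij (congrArg Fin.succ h)

lemma IsCliqueModel.isMinor_completeGraph {n : ℕ} {S : Fin n → Set V} (hS : IsCliqueModel G S) :
    (SimpleGraph.completeGraph (Fin n)).IsMinor G :=
  ⟨S, hS.connected, hS.disjoint, hS.setAdj⟩

lemma isMinor_completeBipartiteGraph {ι κ : Type*} {S : ι → Set V} {T : κ → Set V}
    (hS : ∀ i, (G.induce (S i)).Connected) (hT : ∀ j, (G.induce (T j)).Connected)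
    (hSS : Pairwise fun i j => Disjoint (S i) (S j))
    (hTT : Pairwise fun i j => Disjoint (T i) (T j)) (hST : ∀ i j, Disjoint (S i) (T j))
    (hadj : ∀ i j, SetAdj G (S i) (T j)) : (completeBipartiteGraph ι κ).IsMinor G := by
  refine ⟨Sum.elim S T, Sum.rec hS hT, ?_, ?_⟩
  · rintro (i | i) (j | j) hij
    · exact hSS fun h => hij (congrArg Sum.inl h)
    · exact hST i j
    · exact (hST j i).symm
    · exact hTT fun h => hij (congrArg Sum.inr h)
  · rintro (i | i) (j | j) hij
    · simp at hij
    · exact hadj i j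
    · exact (hadj j i).symm
    · simp at hij

/-- `a` and `b` are joined by a walk of `G` all of whose vertices lie in `T`. -/
def ReachableIn (G : SimpleGraph V) (T : Set V) (a b : V) : Prop :=
  ∃ q : G.Walk a b, ∀ c ∈ q.support, c ∈ T

lemma ReachableIn.refl (ha : a ∈ T) : ReachableIn G T a a :=
  ⟨.nil, by simpa using ha⟩

lemma ReachableIn.trans_adj (h : ReachableIn G T a b) (hbc : G.Adj b c) (hc : c ∈ T) :
    ReachableIn G T a c := by
  obtain ⟨q, hq⟩ := h
  refine ⟨q.concat hbc, fun d hd => ?_⟩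
  rw [SimpleGraph.Walk.support_concat, List.mem_append, List.mem_singleton] at hd
  rcases hd with hd | rfl
  exacts [hq d hd, hc]

/-- `C` is empty or induces a connected subgraph, and can serve as the set of inner vertices of a
connection between `a` and `b`: either `C` is empty and `ab` is an edge, or both `a` and `b` have
a neighbour in `C`. -/
def IsConnector (G : SimpleGraph V) (C : Set V) (a b : V) : Prop :=
  (C = ∅ ∧ G.Adj a b) ∨ ((G.induce C).Connected ∧ SetAdj G C {a} ∧ SetAdj G C {b})

lemma exists_isConnector_of_isPath {q : G.Walk a b} (hq : q.IsPath) (hab : a ≠ b) :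
    ∃ C, (∀ c ∈ C, c ∈ q.support ∧ c ≠ a ∧ c ≠ b) ∧ IsConnector G C a b := by
  cases q with
  | nil => exact absurd rfl hab
  | @cons _ d _ had r =>
    obtain ⟨hr, har⟩ := (SimpleGraph.Walk.cons_isPath_iff _ _).1 hq
    by_cases hdb : d = b
    · subst hdb
      exact ⟨∅, by simp, Or.inl ⟨rfl, had⟩⟩
    have hnil : ¬ r.Nil := SimpleGraph.Walk.not_nil_of_ne hdb
    have hsupp : r.dropLast.support ++ [b] = r.support :=
      SimpleGraph.Walk.support_dropLast_concat hnil
    have hnodup := hr.support_nodup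
    rw [← hsupp, List.nodup_append] at hnodup
    refine ⟨{c | c ∈ r.dropLast.support}, fun c hc => ?_, Or.inr
      ⟨r.dropLast.connected_induce_support, ⟨d, by simp, a, rfl, had.symm⟩,
        ⟨r.penultimate, by simp, b, rfl, r.adj_penultimate hnil⟩⟩⟩
    have hcr : c ∈ r.support := hsupp ▸ List.mem_append_left _ hc
    exact ⟨List.mem_cons_of_mem _ hcr, fun h => har (h ▸ hcr),
      hnodup.2.2 c hc b (List.mem_singleton_self b)⟩

lemma ReachableIn.exists_isConnector (h : ReachableIn G T a b) (hab : a ≠ b) :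
    ∃ C ⊆ T \ {a, b}, IsConnector G C a b := by
  classical
  obtain ⟨q, hq⟩ := h
  obtain ⟨C, hC, hconn⟩ := exists_isConnector_of_isPath q.bypass_isPath hab
  refine ⟨C, fun c hc => ?_, hconn⟩
  obtain ⟨hcq, hca, hcb⟩ := hC c hc
  exact ⟨hq c (q.support_bypass_subset_support hcq), by simp [hca, hcb]⟩

lemma IsConnector.connected_insert (h : IsConnector G C a b) :
    (G.induce (insert a C)).Connected := by
  rcases h with ⟨rfl, -⟩ | ⟨hC, ha, -⟩
  · rw [insert_empty_eq]
    exact connected_induce_singleton G a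
  · exact ha.symm.connected_union (connected_induce_singleton G a).preconnected hC.preconnected

lemma IsConnector.setAdj_insert (h : IsConnector G C a b) : SetAdj G (insert a C) {b} := by
  rcases h with ⟨rfl, hab⟩ | ⟨-, -, hb⟩
  · exact ⟨a, by simp, b, rfl, hab⟩
  · exact hb.mono (Set.subset_insert a C) subset_rfl

lemma IsConnector.connected_of_nonempty (h : IsConnector G C a b) (hC : C.Nonempty) :
    (G.induce C).Connected ∧ SetAdj G C {a} ∧ SetAdj G C {b} :=
  h.resolve_left fun h => hC.ne_empty h.1

lemma IsConnector.union (hC : IsConnector G C a b) (hD : IsConnector G D b c)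
    (hCD : (C ∩ D).Nonempty) :
    (G.induce (C ∪ D)).Connected ∧ SetAdj G (C ∪ D) {a} ∧ SetAdj G (C ∪ D) {b} ∧
      SetAdj G (C ∪ D) {c} := by
  obtain ⟨hC, ha, hb⟩ := hC.connected_of_nonempty hCD.left
  obtain ⟨hD, -, hc⟩ := hD.connected_of_nonempty hCD.right
  exact ⟨SimpleGraph.induce_union_connected hC.preconnected hD.preconnected hCD,
    ha.mono Set.subset_union_left subset_rfl, hb.mono Set.subset_union_left subset_rfl,
    hc.mono Set.subset_union_right subset_rfl⟩

lemma pairwise_fin_three_of_succ {R : Fin 3 → Fin 3 → Prop} (hsymm : ∀ i j, R i j → R j i)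
    (hsucc : ∀ i, R i (i + 1)) : Pairwise R := by
  intro i j hij
  have hcyclic : j = i + 1 ∨ i = j + 1 := by decide +revert
  rcases hcyclic with rfl | rfl
  exacts [hsucc i, hsymm _ _ (hsucc j)]

/- Two connectors between the terminals that meet form a claw; if no two of them meet, they close
up to a triangle. -/
lemma exists_claw_or_triangle {r : Fin 3 → V} (hr : Function.Injective r) (hrT : ∀ i, r i ∈ T)
    (h : ∀ i, ReachableIn G (T \ {r (i + 2)}) (r i) (r (i + 1))) :
    (∃ K ⊆ T, (∀ i, r i ∉ K) ∧ (G.induce K).Connected ∧ ∀ i, SetAdj G K {r i}) ∨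
      ∃ Q : Fin 3 → Set V, IsCliqueModel G Q ∧ ∀ i, Q i ⊆ T ∧ r i ∈ Q i := by
  have hne (i : Fin 3) : r i ≠ r (i + 1) := hr.ne (by decide +revert)
  choose C hCT hC using fun i => (h i).exists_isConnector (hne i)
  have hcyclic (i j : Fin 3) : j = i ∨ j = i + 1 ∨ j = i + 2 := by decide +revert
  have hrC (i j : Fin 3) : r i ∉ C j := fun hi => by
    have := hCT j hi
    rcases hcyclic j i with rfl | rfl | rfl <;> simp at this
  have hCT' (i : Fin 3) : C i ⊆ T := fun c hc => (hCT i hc).1.1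
  by_cases hmeet : ∃ i, (C i ∩ C (i + 1)).Nonempty
  · obtain ⟨i, hi⟩ := hmeet
    obtain ⟨hconn, h₀, h₁, h₂⟩ :=
      (hC i).union (by simpa only [add_assoc] using hC (i + 1)) hi
    refine Or.inl ⟨C i ∪ C (i + 1), Set.union_subset (hCT' _) (hCT' _),
      fun j hj => hj.elim (hrC j i) (hrC j (i + 1)), hconn, fun j => ?_⟩
    rcases hcyclic i j with rfl | rfl | rfl
    exacts [h₀, h₁, h₂]
  · have hdisj (i : Fin 3) : Disjoint (C i) (C (i + 1)) :=
      Set.disjoint_iff_inter_eq_empty.2 <| Set.not_nonempty_iff_eq_empty.1 fun hi => hmeet ⟨i, hi⟩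
    refine Or.inr ⟨fun i => insert (r i) (C i), ⟨fun i => (hC i).connected_insert,
      pairwise_fin_three_of_succ (fun _ _ h => h.symm) fun i => ?_,
      pairwise_fin_three_of_succ (fun _ _ h => h.symm) fun i => ?_⟩, fun i =>
        ⟨Set.insert_subset (hrT i) (hCT' i), Set.mem_insert _ _⟩⟩
    · simp [(hne i).symm, hrC, hdisj i]
    · exact (hC i).setAdj_insert.mono subset_rfl (by simp)

lemma not_isPlanar_of_claw {A K : Set V} {v : V} {r : Fin 3 → V} (hr : Function.Injective r)
    (hA : (G.induce A).Connected) (hK : (G.induce K).Connected) (hAK : Disjoint A K)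
    (hvA : v ∉ A) (hvK : v ∉ K) (hrA : ∀ i, r i ∉ A) (hrK : ∀ i, r i ∉ K)
    (hAr : ∀ i, SetAdj G A {r i}) (hKr : ∀ i, SetAdj G K {r i}) (hvr : ∀ i, G.Adj v (r i)) :
    ¬ G.IsPlanar := by
  have hrv (i : Fin 3) : r i ≠ v := (hvr i).ne'
  have hvr' (i : Fin 3) : SetAdj G {v} {r i} := ⟨v, rfl, r i, rfl, hvr i⟩
  refine fun hG => hG.2 (isMinor_completeBipartiteGraph (S := ![A, {v}, K]) (T := fun i => {r i})
    ?_ (fun i => connected_induce_singleton G (r i)) ?_ ?_ ?_ ?_)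
  · simp [Fin.forall_fin_succ, hA, hK]
  · refine pairwise_fin_three_of_succ (fun _ _ h => h.symm) ?_
    simp [Fin.forall_fin_succ, hvA, hvK, hAK.symm]
  · exact fun i j hij => by simpa using hr.ne hij
  · simp [Fin.forall_fin_succ, hrA, hrK, hrv]
  · simp [Fin.forall_fin_succ, hAr, hKr, hvr']

lemma not_isPlanar_of_triangle {A : Set V} {v : V} {Q : Fin 3 → Set V} (hQ : IsCliqueModel G Q)
    (hA : (G.induce A).Connected) (hvA : v ∉ A) (hQA : ∀ i, Disjoint A (Q i))
    (hvQ : ∀ i, v ∉ Q i) (hAv : SetAdj G A {v}) (hAQ : ∀ i, SetAdj G A (Q i))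
    (hadj : ∀ i, SetAdj G {v} (Q i)) : ¬ G.IsPlanar := by
  have hvQ : IsCliqueModel G (Fin.cons {v} Q : Fin 4 → Set V) :=
    hQ.cons (connected_induce_singleton G v) (by simpa using hvQ) hadj
  refine fun hG => hG.1 (hvQ.cons hA ?_ ?_).isMinor_completeGraph
  · exact Fin.cases (by simpa using hvA) hQA
  · exact Fin.cases hAv hAQ

/- Contracting `A` gives a second common neighbour of the `r i`, adjacent to `v`. A claw on the
`r i` then produces a `K₃,₃` minor and a triangle through them a `K₅` minor. -/
lemma not_isPlanar_of_reachableIn {A T : Set V} {v : V} {r : Fin 3 → V}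
    (hr : Function.Injective r) (hA : (G.induce A).Connected) (hAT : Disjoint A T) (hvA : v ∉ A)
    (hvT : v ∉ T) (hrT : ∀ i, r i ∈ T) (hAv : SetAdj G A {v}) (hAr : ∀ i, SetAdj G A {r i})
    (hvr : ∀ i, G.Adj v (r i)) (h : ∀ i, ReachableIn G (T \ {r (i + 2)}) (r i) (r (i + 1))) :
    ¬ G.IsPlanar := by
  rcases exists_claw_or_triangle hr hrT h with ⟨K, hKT, hrK, hK, hKr⟩ | ⟨Q, hQ, hQr⟩
  · exact not_isPlanar_of_claw hr hA hK (hAT.mono_right hKT) hvA (fun hv => hvT (hKT hv))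
      (fun i hi => Set.disjoint_left.1 hAT hi (hrT i)) hrK hAr hKr hvr
  · have hrQ (i : Fin 3) : {r i} ⊆ Q i := Set.singleton_subset_iff.2 (hQr i).2
    exact not_isPlanar_of_triangle hQ hA hvA (fun i => hAT.mono_right (hQr i).1)
      (fun i hv => hvT ((hQr i).1 hv)) hAv (fun i => (hAr i).mono subset_rfl (hrQ i))
      fun i => ⟨v, rfl, r i, (hQr i).2, hvr i⟩

end Minors

section Coefficients

variable {σ R : Type*}

lemma coeff_add_mul_of_isHomogeneous [CommSemiring R] {F G : MvPolynomial σ R} {m n : σ →₀ ℕ}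
    (hF : F.IsHomogeneous m.degree) (hn : ∀ v ∈ F.vars, n v = 0) :
    coeff (m + n) (F * G) = coeff m F * coeff n G := by
  classical
  rw [coeff_mul, Finset.sum_eq_single_of_mem (m, n) (by simp)]
  rintro ⟨a, b⟩ hab hne
  rw [HasAntidiagonal.mem_antidiagonal] at hab
  by_contra hcoeff
  have ha : a ∈ F.support := mem_support_iff.2 (left_ne_zero_of_mul hcoeff)
  have ham : a ≤ m := fun v => by
    by_cases hv : v ∈ F.vars
    · have := DFunLike.congr_fun hab v
      simp only [Finsupp.add_apply, hn v hv] at this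
      omega
    · simp [mem_support_notMem_vars_zero ha hv]
  obtain ⟨c, rfl⟩ := exists_add_of_le ham
  have hdegree : a.degree = (a + c).degree :=
    of_not_not fun h => mem_support_iff.1 ha (hF.coeff_eq_zero h)
  have hc : c = 0 := (Finsupp.degree_eq_zero_iff c).1 (by rw [map_add] at hdegree; omega)
  subst hc
  rw [add_zero] at hab hne
  exact hne (Prod.ext rfl (add_left_cancel hab))

lemma coeff_ne_zero_iff_of_associated [CommRing R] [IsDomain R]
    {F G : MvPolynomial σ R} (h : Associated F G) (k : σ →₀ ℕ) : coeff k F ≠ 0 ↔ coeff k G ≠ 0 := by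
  obtain ⟨c, rfl⟩ := h
  obtain ⟨r, hr, hc⟩ := isUnit_iff_eq_C_of_isReduced.1 c.isUnit
  rw [hc, mul_comm, coeff_C_mul]
  simp [hr.ne_zero]

/-- The exponent vector of the squarefree monomial `∏ u ∈ U, X u`. -/
noncomputable def oneOn (U : Finset σ) : σ →₀ ℕ :=
  Finsupp.indicator U fun _ _ => 1

lemma oneOn_apply [DecidableEq σ] (U : Finset σ) (v : σ) : oneOn U v = if v ∈ U then 1 else 0 := by
  simp [oneOn, Finsupp.indicator_apply]

lemma oneOn_empty : oneOn (∅ : Finset σ) = 0 := by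
  classical
  ext v
  simp [oneOn_apply]

lemma oneOn_insert [DecidableEq σ] {U : Finset σ} {u : σ} (hu : u ∉ U) :
    oneOn (insert u U) = oneOn U + Finsupp.single u 1 := by
  ext v
  by_cases hvu : v = u <;> simp [oneOn_apply, hvu, hu]

lemma coeff_mul_X_of_apply_eq_zero [CommSemiring R] (F : MvPolynomial σ R) {v : σ} {n : σ →₀ ℕ}
    (hn : n v = 0) : coeff n (F * X v) = 0 := by
  classical
  rw [coeff_mul_X', if_neg (by simpa using hn)]

lemma coeff_mul_X_of_notMem_vars [CommSemiring R] {F : MvPolynomial σ R} {v w : σ}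
    {n : σ →₀ ℕ} (hF : v ∉ F.vars) (hvw : v ≠ w) (hn : n v ≠ 0) : coeff n (F * X w) = 0 := by
  classical
  rw [coeff_mul_X']
  split_ifs with hw
  · refine notMem_support_iff.1 fun hmem => hn ?_
    simpa [hvw] using mem_support_notMem_vars_zero hmem hF
  · rfl

variable [CommRing R] (F : MvPolynomial σ R) {U : Finset σ} {v w : σ} {n : σ →₀ ℕ}

lemma coeff_add_single_mul_X_sub_X (hvw : v ≠ w) (hn : n w = 0) :
    coeff (n + Finsupp.single v 1) (F * (X w - X v)) = -coeff n F := by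
  classical
  rw [mul_sub, coeff_sub, coeff_mul_X, coeff_mul_X_of_apply_eq_zero F (by simp [hn, hvw]),
    zero_sub]

lemma coeff_add_oneOn_mul_prod (hv : v ∉ U) (hn : n v = 0) :
    coeff (n + oneOn U) (F * ∏ u ∈ U, (X u - X v)) = coeff n F := by
  classical
  induction U using Finset.induction_on with
  | empty => simp [oneOn_empty]
  | insert u U hu ih =>
    rw [mem_insert, not_or] at hv
    rw [prod_insert hu, mul_comm (_ - _), ← mul_assoc, mul_sub, coeff_sub, oneOn_insert hu,
      ← add_assoc, coeff_mul_X, coeff_mul_X_of_apply_eq_zero, sub_zero, ih hv.2]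
    simp [oneOn_apply, hn, hv]

lemma coeff_add_oneOn_add_single_mul_prod (hv : v ∉ U) (hn : n v = 0) :
    coeff (n + oneOn U + Finsupp.single v 1) (F * ∏ u ∈ U, (X u - X v)) =
      coeff (n + Finsupp.single v 1) F - ∑ u ∈ U, coeff (n + Finsupp.single u 1) F := by
  classical
  induction U using Finset.induction_on with
  | empty => simp [oneOn_empty]
  | insert u U hu ih =>
    rw [mem_insert, not_or] at hv
    have hX_u : n + oneOn (insert u U) + Finsupp.single v 1 =
        n + oneOn U + Finsupp.single v 1 + Finsupp.single u 1 := by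
      rw [oneOn_insert hu]
      abel
    have hX_v : n + oneOn (insert u U) + Finsupp.single v 1 =
        n + Finsupp.single u 1 + oneOn U + Finsupp.single v 1 := by
      rw [oneOn_insert hu]
      abel
    rw [prod_insert hu, mul_comm (_ - _), ← mul_assoc, mul_sub, coeff_sub, hX_v, coeff_mul_X,
      ← hX_v, hX_u, coeff_mul_X, ih hv.2, coeff_add_oneOn_mul_prod F hv.2 (by simp [hn, hv]),
      sum_insert hu]
    ring

/- The coefficient of `x_v` in the product has the nonzero term contributed by `x_w - x_v`, so it
vanishes only if one of the terms contributed by the other factors is nonzero too. -/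
lemma exists_coeff_mul_prod_ne_zero [DecidableEq σ] (hF : v ∉ F.vars) (hv : v ∉ U)
    (hvw : v ≠ w) (hn : n v = 0) (hcoeff : coeff n F ≠ 0) :
    ∃ u ∈ insert v U, coeff (n + oneOn U + Finsupp.single u 1)
      (F * (X w - X v) * ∏ u ∈ U, (X u - X v)) ≠ 0 := by
  by_contra! hzero
  have hsum : ∑ u ∈ U, coeff (n + Finsupp.single u 1) (F * (X w - X v)) = 0 := by
    refine sum_eq_zero fun u hu => ?_
    have hvu : v ≠ u := fun h => hv (h ▸ hu)
    rw [← coeff_add_oneOn_mul_prod _ hv (by simp [hn, hvu]), add_right_comm]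
    exact hzero u (mem_insert_of_mem hu)
  have hlead := hzero v (mem_insert_self v U)
  rw [coeff_add_oneOn_add_single_mul_prod _ hv hn, hsum, sub_zero, mul_sub, coeff_sub,
    coeff_mul_X_of_notMem_vars hF hvw (by simp), coeff_mul_X, zero_sub, neg_eq_zero] at hlead
  exact hcoeff hlead

end Coefficients

section GraphPolynomial

lemma incidenceFinset_eq_image_neighborFinset {V : Type*} [DecidableEq V] (H : SimpleGraph V)
    (v : V) [Fintype (H.neighborSet v)] :
    H.incidenceFinset v = (H.neighborFinset v).image (s(v, ·)) := by
  ext e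
  induction e with | _ a b
  simp only [SimpleGraph.mem_incidenceFinset, SimpleGraph.mk'_mem_incidenceSet_iff, mem_image,
    SimpleGraph.mem_neighborFinset]
  constructor
  · rintro ⟨hab, rfl | rfl⟩
    exacts [⟨b, hab, rfl⟩, ⟨a, hab.symm, Sym2.eq_swap⟩]
  · rintro ⟨u, hvu, he⟩
    rcases Sym2.eq_iff.1 he with ⟨rfl, rfl⟩ | ⟨rfl, rfl⟩
    exacts [⟨hvu, .inl rfl⟩, ⟨hvu.symm, .inr rfl⟩]

variable {V : Type*} [Fintype V] [LinearOrder V] {H K : SimpleGraph V}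

lemma graphPoly_eq_prod_edgeFinset (H : SimpleGraph V) [Fintype H.edgeSet] :
    graphPoly H = ∏ e ∈ H.edgeFinset, (X e.sup - X e.inf) := by
  classical
  refine prod_bij' (fun p _ => s(p.1, p.2)) (fun e _ => (e.inf, e.sup)) ?_ ?_ ?_ ?_ ?_
  · simp +contextual
  · intro e
    induction e with | _ a b
    simp only [SimpleGraph.mem_edgeFinset, SimpleGraph.mem_edgeSet, Sym2.inf_mk, Sym2.sup_mk,
      mem_filter_univ]
    intro hab
    rcases hab.ne.lt_or_gt with h | h
    · simpa [h.le, h] using hab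
    · simpa [h.le, h] using hab.symm
  · rintro ⟨a, b⟩ hab
    have hlt : a < b := (mem_filter.1 hab).2.2
    simp [hlt.le]
  · intro e _
    induction e with | _ a b
    rcases le_total a b with h | h <;> simp [h, Sym2.eq_swap]
  · rintro ⟨a, b⟩ hab
    have hlt : a < b := (mem_filter.1 hab).2.2
    simp [hlt.le]

lemma graphPoly_sup (h : Disjoint H K) : graphPoly (H ⊔ K) = graphPoly H * graphPoly K := by
  classical
  rw [graphPoly_eq_prod_edgeFinset, graphPoly_eq_prod_edgeFinset, graphPoly_eq_prod_edgeFinset,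
    SimpleGraph.edgeFinset_sup, prod_union (SimpleGraph.disjoint_edgeFinset.2 h)]

lemma graphPoly_isHomogeneous (H : SimpleGraph V) [Fintype H.edgeSet] :
    (graphPoly H).IsHomogeneous #H.edgeFinset := by
  rw [graphPoly_eq_prod_edgeFinset, card_eq_sum_ones]
  exact .prod _ _ _ fun e _ => (isHomogeneous_X _ _).sub (isHomogeneous_X _ _)

lemma graphPoly_isHomogeneous_degree {k : V →₀ ℕ} (hk : coeff k (graphPoly H) ≠ 0) :
    (graphPoly H).IsHomogeneous k.degree := by
  classical
  have hH := graphPoly_isHomogeneous H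
  rwa [of_not_not fun h => hk (hH.coeff_eq_zero h)]

lemma notMem_vars_graphPoly {v : V} (hv : ∀ u, ¬ H.Adj v u) : v ∉ (graphPoly H).vars := by
  classical
  intro hmem
  obtain ⟨⟨a, b⟩, hab, hvab⟩ := mem_biUnion.1 (vars_prod _ hmem)
  have hadj : H.Adj a b := (mem_filter.1 hab).2.1
  have hv_eq : v = b ∨ v = a := by simpa using vars_sub_subset _ hvab
  rcases hv_eq with rfl | rfl
  exacts [hv a hadj.symm, hv b hadj]

lemma apply_eq_zero_of_coeff_graphPoly_ne_zero {k : V →₀ ℕ} (hk : coeff k (graphPoly H) ≠ 0)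
    {v : V} (hv : ∀ u, ¬ H.Adj v u) : k v = 0 :=
  mem_support_notMem_vars_zero (mem_support_iff.2 hk) (notMem_vars_graphPoly hv)

lemma graphPoly_eq_mul_prod_neighborFinset (H : SimpleGraph V) (v : V)
    [Fintype (H.neighborSet v)] :
    graphPoly H = graphPoly (H.deleteIncidenceSet v) *
      ∏ u ∈ H.neighborFinset v, (X (v ⊔ u) - X (v ⊓ u)) := by
  classical
  have hstar : ∏ e ∈ H.incidenceFinset v, (X e.sup - X e.inf : MvPolynomial V ℝ) =
      ∏ u ∈ H.neighborFinset v, (X (v ⊔ u) - X (v ⊓ u)) := by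
    rw [incidenceFinset_eq_image_neighborFinset]
    exact prod_image fun _ _ _ _ h => Sym2.congr_right.1 h
  have hedges : (H.deleteIncidenceSet v).edgeFinset = H.edgeFinset \ H.incidenceFinset v := by
    convert H.edgeFinset_deleteIncidenceSet_eq_sdiff v
  rw [graphPoly_eq_prod_edgeFinset, graphPoly_eq_prod_edgeFinset, hedges,
    ← prod_sdiff (H.incidenceFinset_subset v), hstar]

lemma associated_graphPoly_mul_prod_neighborFinset (H : SimpleGraph V) (v : V)
    [Fintype (H.neighborSet v)] :
    Associated (graphPoly H)
      (graphPoly (H.deleteIncidenceSet v) * ∏ u ∈ H.neighborFinset v, (X u - X v)) := by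
  rw [graphPoly_eq_mul_prod_neighborFinset H v]
  refine .mul_left _ (Associated.prod _ _ _ fun u _ => ?_)
  rcases le_total v u with h | h
  · rw [sup_of_le_right h, inf_of_le_left h]
    exact .refl _
  · rw [sup_of_le_left h, inf_of_le_right h, ← neg_sub, Associated.neg_left_iff]
    exact .refl _

lemma coeff_add_oneOn_graphPoly_ne_zero {m : V →₀ ℕ} {U : Finset V} {v : V}
    (hU : ∀ u, H.Adj v u ↔ u ∈ U) (hm : coeff m (graphPoly (H.deleteIncidenceSet v)) ≠ 0) :
    coeff (m + oneOn U) (graphPoly H) ≠ 0 := by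
  classical
  have hmv : m v = 0 :=
    apply_eq_zero_of_coeff_graphPoly_ne_zero hm (by simp [SimpleGraph.deleteIncidenceSet_adj])
  have hUv : H.neighborFinset v = U := by
    ext u
    simp [hU]
  have hvU : v ∉ U := (hU v).not.1 (H.irrefl)
  rwa [coeff_ne_zero_iff_of_associated (associated_graphPoly_mul_prod_neighborFinset H v), hUv,
    coeff_add_oneOn_mul_prod _ hvU hmv]

lemma coeff_add_oneOn_add_single_graphPoly_ne_zero {m : V →₀ ℕ} {U : Finset V} {v p : V}
    (hU : ∀ u, H.Adj v u ↔ u ∈ insert p U) (hpU : p ∉ U) (hmp : m p = 0)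
    (hm : coeff m (graphPoly (H.deleteIncidenceSet v)) ≠ 0) :
    coeff (m + oneOn U + Finsupp.single v 1) (graphPoly H) ≠ 0 := by
  classical
  have hmv : m v = 0 :=
    apply_eq_zero_of_coeff_graphPoly_ne_zero hm (by simp [SimpleGraph.deleteIncidenceSet_adj])
  have hUv : H.neighborFinset v = insert p U := by
    ext u
    simp [hU]
  have hv : v ≠ p ∧ v ∉ U := by simpa using (hU v).not.1 H.irrefl
  rwa [coeff_ne_zero_iff_of_associated (associated_graphPoly_mul_prod_neighborFinset H v), hUv,
    prod_insert hpU, mul_left_comm, mul_comm,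
    coeff_add_single_mul_X_sub_X _ hv.1 (by simp [hmp, oneOn_apply, hpU]), neg_ne_zero,
    coeff_add_oneOn_mul_prod _ hv.2 hmv]

lemma exists_coeff_graphPoly_ne_zero {m : V →₀ ℕ} {U : Finset V} {v w p : V}
    (hU : ∀ u, H.Adj v u ↔ u ∈ insert p (insert w U)) (hwU : w ∉ U) (hp : p ∉ insert w U)
    (hmp : m p = 0) (hm : coeff m (graphPoly (H.deleteIncidenceSet v)) ≠ 0) :
    ∃ u ∈ insert v U,
      coeff (m + oneOn U + Finsupp.single u 1 + Finsupp.single v 1) (graphPoly H) ≠ 0 := by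
  classical
  have hv_isolated : ∀ u, ¬ (H.deleteIncidenceSet v).Adj v u := by
    simp [SimpleGraph.deleteIncidenceSet_adj]
  have hUv : H.neighborFinset v = insert p (insert w U) := by
    ext u
    simp [hU]
  have hv : v ≠ p ∧ v ≠ w ∧ v ∉ U := by simpa using (hU v).not.1 H.irrefl
  obtain ⟨u, hu, hcoeff⟩ := exists_coeff_mul_prod_ne_zero _ (notMem_vars_graphPoly hv_isolated)
    hv.2.2 hv.2.1 (apply_eq_zero_of_coeff_graphPoly_ne_zero hm hv_isolated) hm
  have hpu : p ∉ U ∧ p ≠ u := by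
    rw [mem_insert, not_or] at hp
    rcases mem_insert.1 hu with rfl | hu
    exacts [⟨hp.2, hv.1.symm⟩, ⟨hp.2, fun h => hp.2 (h ▸ hu)⟩]
  refine ⟨u, hu, ?_⟩
  rwa [coeff_ne_zero_iff_of_associated (associated_graphPoly_mul_prod_neighborFinset H v), hUv,
    prod_insert hp, prod_insert hwU, mul_left_comm, mul_comm,
    coeff_add_single_mul_X_sub_X _ hv.1 (by simp [hmp, oneOn_apply, hpu]), neg_ne_zero,
    ← mul_assoc]

lemma eval_graphPoly_eq_zero {x : V → ℝ} {u v : V} (huv : H.Adj u v) (hx : x u = x v) :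
    eval x (graphPoly H) = 0 := by
  rw [graphPoly, map_prod]
  rcases huv.ne.lt_or_gt with h | h
  · exact prod_eq_zero (i := (u, v)) (by simp [huv, h]) (by simp [hx])
  · exact prod_eq_zero (i := (v, u)) (by simp [huv.symm, h]) (by simp [hx])

lemma exists_listColoring_real {m : V →₀ ℕ} (hm : coeff m (graphPoly H) ≠ 0)
    {L : V → Finset ℝ} (hL : ∀ v, m v < #(L v)) :
    ∃ φ : V → ℝ, (∀ v, φ v ∈ L v) ∧ ∀ u v, H.Adj u v → φ u ≠ φ v := by
  have hdegree : (graphPoly H).totalDegree = m.degree :=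
    (graphPoly_isHomogeneous_degree hm).totalDegree (ne_zero_iff.2 ⟨m, hm⟩)
  obtain ⟨φ, hφL, hφ⟩ :=
    combinatorial_nullstellensatz_exists_eval_nonzero _ m hm hdegree L hL
  exact ⟨φ, hφL, fun u v huv h => hφ (eval_graphPoly_eq_zero huv h)⟩

lemma exists_listColoring {m : V →₀ ℕ} (hm : coeff m (graphPoly H) ≠ 0)
    {α : Type*} {L : V → Finset α} (hL : ∀ v, m v < #(L v)) :
    ∃ φ : V → α, (∀ v, φ v ∈ L v) ∧ ∀ u v, H.Adj u v → φ u ≠ φ v := by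
  classical
  obtain ⟨f, hf⟩ := Set.countable_iff_exists_injOn.1 (univ.biUnion L).countable_toSet
  have hLf (v : V) : Set.InjOn (fun a => (f a : ℝ)) (L v) := fun a ha b hb hab =>
    hf (mem_biUnion.2 ⟨v, mem_univ v, ha⟩) (mem_biUnion.2 ⟨v, mem_univ v, hb⟩)
      (Nat.cast_injective hab)
  obtain ⟨ψ, hψL, hψ⟩ := exists_listColoring_real hm (L := fun v => (L v).image fun a => (f a : ℝ))
    fun v => by simpa only [card_image_of_injOn (hLf v)] using hL v
  choose φ hφL hφ using fun v => mem_image.1 (hψL v)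
  exact ⟨φ, hφL, fun u v huv h => hψ u v huv (by rw [← hφ u, ← hφ v, h])⟩

end GraphPolynomial

section Certificates

variable {V : Type*} {G : SimpleGraph V} {W B P T : Finset V} {a b p v : V}

/-- The graph on `V` formed by the edges of `G` with both ends in `W`, except those with both ends
in the root set `P`. -/
def rootedSubgraph (G : SimpleGraph V) (W P : Finset V) : SimpleGraph V where
  Adj a b := G.Adj a b ∧ (a ∈ W ∧ b ∈ W) ∧ ¬ (a ∈ P ∧ b ∈ P)
  symm.symm _ _ := fun ⟨h, ⟨ha, hb⟩, hP⟩ => ⟨h.symm, ⟨hb, ha⟩, fun ⟨hb, ha⟩ => hP ⟨ha, hb⟩⟩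
  loopless.irrefl _ h := G.irrefl h.1

lemma rootedSubgraph_adj :
    (rootedSubgraph G W P).Adj a b ↔ G.Adj a b ∧ (a ∈ W ∧ b ∈ W) ∧ ¬ (a ∈ P ∧ b ∈ P) :=
  .rfl

lemma deleteIncidenceSet_rootedSubgraph [DecidableEq V] (G : SimpleGraph V) (W P : Finset V)
    (v : V) :
    (rootedSubgraph G W P).deleteIncidenceSet v = rootedSubgraph G (W.erase v) (P.erase v) := by
  ext a b
  simp only [SimpleGraph.deleteIncidenceSet_adj, rootedSubgraph_adj, mem_erase]
  tauto

lemma rootedSubgraph_singleton (G : SimpleGraph V) (W : Finset V) (p : V) :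
    rootedSubgraph G W {p} = rootedSubgraph G W ∅ := by
  ext a b
  simp only [rootedSubgraph_adj, mem_singleton, notMem_empty, and_self, not_false_eq_true,
    and_true, and_congr_right_iff, and_iff_left_iff_imp]
  rintro hab - ⟨rfl, rfl⟩
  exact G.irrefl hab

lemma rootedSubgraph_univ_empty [Fintype V] (G : SimpleGraph V) :
    rootedSubgraph G univ ∅ = G := by
  ext a b
  simp [rootedSubgraph_adj]

/-- The vertices of `W` that have a neighbour in `A`. -/
noncomputable def boundary (G : SimpleGraph V) (A : Set V) (W : Finset V) : Finset V :=
  open Classical in W.filter fun u => SetAdj G A {u}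

lemma mem_boundary {A : Set V} {u : V} : u ∈ boundary G A W ↔ u ∈ W ∧ SetAdj G A {u} := by
  classical simp [boundary]

lemma boundary_subset (G : SimpleGraph V) (A : Set V) (W : Finset V) : boundary G A W ⊆ W := by
  classical exact filter_subset _ _

lemma boundary_inter_of_subset [DecidableEq V] {A : Set V} (hT : T ⊆ W) :
    boundary G A W ∩ T = boundary G A T := by
  ext u
  simp only [mem_inter, mem_boundary]
  have := @hT u
  tauto

/-- The neighbours of `v` in `W` that lie outside `B`; with `B` the boundary of `W`, they are the
vertices that join the boundary when `v` is removed from `W`. -/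
noncomputable def freshNeighbors (G : SimpleGraph V) (W B : Finset V) (v : V) : Finset V :=
  open Classical in (W \ B).filter (G.Adj v)

lemma mem_freshNeighbors {u : V} :
    u ∈ freshNeighbors G W B v ↔ (u ∈ W ∧ u ∉ B) ∧ G.Adj v u := by
  simp [freshNeighbors]

lemma boundary_insert_erase [DecidableEq V] (G : SimpleGraph V) (A : Set V) (W : Finset V)
    (v : V) :
    boundary G (insert v A) (W.erase v) =
      (boundary G A W ∪ freshNeighbors G W (boundary G A W) v).erase v := by
  ext u
  simp only [mem_boundary, mem_freshNeighbors, mem_erase, mem_union, SetAdj,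
    Set.exists_mem_insert, Set.mem_singleton_iff, exists_eq_left]
  by_cases hu : ∃ x ∈ A, G.Adj x u
  · simp only [hu]
    tauto
  · simp only [hu]
    tauto

lemma boundary_singleton_erase [DecidableEq V] (G : SimpleGraph V) (W : Finset V) (v : V) :
    boundary G {v} (W.erase v) = ({v} ∪ freshNeighbors G W {v} v).erase v := by
  ext u
  simp only [mem_boundary, mem_freshNeighbors, mem_erase, mem_union, SetAdj,
    Set.mem_singleton_iff, exists_eq_left, mem_singleton]
  tauto

variable [Fintype V] [LinearOrder V] {S Y : Finset V} {m : V →₀ ℕ}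

/-- A monomial `x ^ m` of the graph polynomial of `rootedSubgraph G W P` witnessing the inductive
claim: no variable in `P` occurs, exponents are at most `2` on `B` and at most `3` elsewhere,
except that they may be `4` on a set `S` of vertices of `W \ B`. Each vertex of `S` is paid for by
one of a set `Y`, whose members have exponent at most `1` as long as they lie in `B`. -/
structure IsCertificate (G : SimpleGraph V) (W B P S Y : Finset V) (m : V →₀ ℕ) : Prop where
  subset_left : S ⊆ W \ B
  subset_right : Y ⊆ W \ P
  disjoint : Disjoint S Y
  card_le : #S ≤ #Y
  coeff_ne_zero : coeff m (graphPoly (rootedSubgraph G W P)) ≠ 0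
  apply_root : ∀ v ∈ P, m v = 0
  apply_boundary : ∀ v ∈ B, m v ≤ 2 ∧ (v ∈ Y → m v ≤ 1)
  apply_le : ∀ v, m v ≤ 4 ∧ (v ∉ S → m v ≤ 3)

/-- The inductive claim for the region `W` with boundary `B` and root set `P`. -/
def HasCertificate (G : SimpleGraph V) (W B P : Finset V) : Prop :=
  ∃ S Y m, IsCertificate G W B P S Y m

namespace IsCertificate

lemma apply_eq_zero (h : IsCertificate G W B P S Y m) {v : V} (hv : v ∉ W) : m v = 0 :=
  apply_eq_zero_of_coeff_graphPoly_ne_zero h.coeff_ne_zero fun _ hadj => hv hadj.2.1.1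

/- The accounting for putting `v` back: passing from `m` to `m + n` may raise the exponent of a
fresh neighbour `u` of `v` by `2` only if `u ∈ Y`, where `m u ≤ 1`, or if `u ∈ S₀`. -/
lemma extend {S₀ Y₀ : Finset V} {n : V →₀ ℕ}
    (h : IsCertificate G (W.erase v) ((B ∪ freshNeighbors G W B v).erase v) (P.erase v) S Y m)
    (hv : v ∈ W) (hPB : P ⊆ B)
    (hcoeff : coeff (m + n) (graphPoly (rootedSubgraph G W P)) ≠ 0)
    (hS₀ : S₀ ⊆ freshNeighbors G W B v) (hS₀Y : Disjoint S₀ Y) (hY₀ : Y₀ ⊆ {v} \ P)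
    (hcard : #S₀ ≤ #Y₀)
    (hn : ∀ u, u ≠ v → u ∉ freshNeighbors G W B v → n u = 0)
    (hn_fresh : ∀ u ∈ freshNeighbors G W B v, n u ≤ 2 ∧ (u ∉ S₀ → u ∉ Y → n u ≤ 1))
    (hnv : n v ≤ 2) (hnvY : v ∈ Y₀ → n v ≤ 1) (hnvP : v ∈ P → n v = 0) :
    IsCertificate G W B P (S ∪ S₀) (Y ∪ Y₀) (m + n) := by
  have hmv : m v = 0 := h.apply_eq_zero (notMem_erase v W)
  obtain ⟨hS, hY⟩ := And.intro h.subset_left h.subset_right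
  have hfreshB : ∀ u ∈ freshNeighbors G W B v, (u ∈ W ∧ u ∉ B) ∧ u ≠ v := fun u hu =>
    ⟨(mem_freshNeighbors.1 hu).1, (mem_freshNeighbors.1 hu).2.ne'⟩
  have hm_fresh : ∀ u ∈ freshNeighbors G W B v, m u ≤ 2 ∧ (u ∈ Y → m u ≤ 1) := fun u hu =>
    h.apply_boundary u (by simp [hfreshB u hu, hu])
  have hYY₀ : Disjoint Y Y₀ := by grind [disjoint_left]
  refine ⟨by grind, by grind, by grind [h.disjoint, disjoint_left], ?_, hcoeff, ?_, ?_, ?_⟩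
  · rw [card_union_of_disjoint hYY₀]
    exact (card_union_le S S₀).trans (add_le_add h.card_le hcard)
  · intro u hu
    have := h.apply_root u
    have := @hPB u hu
    rw [Finsupp.add_apply]
    grind
  · intro u hu
    have := h.apply_boundary u
    rw [Finsupp.add_apply]
    grind
  · intro u
    have := h.apply_le u
    rw [Finsupp.add_apply]
    by_cases hu : u ∈ freshNeighbors G W B v
    · obtain ⟨hmu, hmuY⟩ := hm_fresh u hu
      obtain ⟨hnu, hnu_le⟩ := hn_fresh u hu
      refine ⟨by omega, fun huS => ?_⟩
      have huS₀ : u ∉ S₀ := fun h => huS (mem_union_right S h)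
      by_cases huY : u ∈ Y
      · have := hmuY huY
        omega
      · have := hnu_le huS₀ huY
        omega
    · rcases eq_or_ne u v with rfl | huv
      · exact ⟨by omega, fun _ => by omega⟩
      · rw [hn u huv hu, add_zero]
        exact ⟨this.1, fun huS => this.2 fun h => huS (mem_union_left S₀ h)⟩

end IsCertificate

namespace HasCertificate

lemma of_delete_root (hp : p ∈ P) (hPB : P ⊆ B) (hBW : B ⊆ W)
    (hBP : ∀ u ∈ B, G.Adj p u → u ∈ P)
    (h : HasCertificate G (W.erase p) ((B ∪ freshNeighbors G W B p).erase p) (P.erase p)) :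
    HasCertificate G W B P := by
  obtain ⟨S, Y, m, h⟩ := h
  have hpfresh : p ∉ freshNeighbors G W B p := fun hmem =>
    G.irrefl (mem_freshNeighbors.1 hmem).2
  have hadj : ∀ u, (rootedSubgraph G W P).Adj p u ↔ u ∈ freshNeighbors G W B p := by
    intro u
    rw [rootedSubgraph_adj, mem_freshNeighbors]
    have := hBP u
    have := @hPB u
    have := hBW (hPB hp)
    tauto
  have hcoeff : coeff (m + oneOn (freshNeighbors G W B p)) (graphPoly (rootedSubgraph G W P)) ≠ 0 :=
    coeff_add_oneOn_graphPoly_ne_zero hadj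
      (by simpa only [deleteIncidenceSet_rootedSubgraph] using h.coeff_ne_zero)
  refine ⟨_, _, _, h.extend (S₀ := ∅) (Y₀ := ∅) (hBW (hPB hp)) hPB hcoeff (empty_subset _)
    (disjoint_empty_left _) (empty_subset _) le_rfl ?_ ?_ ?_ ?_ ?_⟩
  all_goals simp +contextual [oneOn_apply, hpfresh]

lemma of_delete_vertex_of_unique (hp : p ∈ P) (hPB : P ⊆ B) (hBW : B ⊆ W) (hvB : v ∈ B)
    (hvP : v ∉ P) (hv : ∀ u ∈ B, G.Adj v u ↔ u = p)
    (h : HasCertificate G (W.erase v) ((B ∪ freshNeighbors G W B v).erase v) P) :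
    HasCertificate G W B P := by
  rw [← erase_eq_of_notMem hvP] at h
  obtain ⟨S, Y, m, h⟩ := h
  have hvfresh : v ∉ freshNeighbors G W B v := fun hmem =>
    G.irrefl (mem_freshNeighbors.1 hmem).2
  have hpfresh : p ∉ freshNeighbors G W B v := fun hmem =>
    (mem_freshNeighbors.1 hmem).1.2 (hPB hp)
  have hadj : ∀ u, (rootedSubgraph G W P).Adj v u ↔ u ∈ insert p (freshNeighbors G W B v) := by
    intro u
    rw [rootedSubgraph_adj, mem_insert, mem_freshNeighbors]
    have := hv u
    have := @hBW u
    have := hBW hvB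
    have : u = p → u ∈ B := fun h => h ▸ hPB hp
    tauto
  have hmp : m p = 0 := h.apply_root p (mem_erase.2 ⟨fun h => hvP (h ▸ hp), hp⟩)
  have hcoeff := coeff_add_oneOn_add_single_graphPoly_ne_zero hadj hpfresh hmp
    (by simpa only [deleteIncidenceSet_rootedSubgraph] using h.coeff_ne_zero)
  rw [add_assoc] at hcoeff
  refine ⟨_, _, _, h.extend (S₀ := ∅) (Y₀ := ∅) (hBW hvB) hPB hcoeff (empty_subset _)
    (disjoint_empty_left _) (empty_subset _) le_rfl ?_ ?_ ?_ ?_ ?_⟩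
  all_goals
    simp only [Finsupp.add_apply, oneOn_apply, Finsupp.single_apply]
    grind

lemma of_delete_vertex_of_pair (hp : p ∈ P) (hPB : P ⊆ B) (hBW : B ⊆ W) (hvB : v ∈ B)
    (hvP : v ∉ P) {w : V} (hwB : w ∈ B) (hwp : w ≠ p) (hv : ∀ u ∈ B, G.Adj v u ↔ u = p ∨ u = w)
    (h : HasCertificate G (W.erase v) ((B ∪ freshNeighbors G W B v).erase v) P) :
    HasCertificate G W B P := by
  rw [← erase_eq_of_notMem hvP] at h
  obtain ⟨S, Y, m, h⟩ := h
  have hvfresh : v ∉ freshNeighbors G W B v := fun hmem =>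
    G.irrefl (mem_freshNeighbors.1 hmem).2
  have hfreshB : ∀ u ∈ B, u ∉ freshNeighbors G W B v := fun u hu hmem =>
    (mem_freshNeighbors.1 hmem).1.2 hu
  have hadj : ∀ u, (rootedSubgraph G W P).Adj v u ↔
      u ∈ insert p (insert w (freshNeighbors G W B v)) := by
    intro u
    rw [rootedSubgraph_adj, mem_insert, mem_insert, mem_freshNeighbors]
    have := hv u
    have := @hBW u
    have := hBW hvB
    have : u = p → u ∈ B := fun h => h ▸ hPB hp
    have : u = w → u ∈ B := fun h => h ▸ hwB
    tauto
  have hmp : m p = 0 := h.apply_root p (mem_erase.2 ⟨fun h => hvP (h ▸ hp), hp⟩)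
  obtain ⟨u, hu, hcoeff⟩ := exists_coeff_graphPoly_ne_zero hadj (hfreshB w hwB)
    (by simp [hwp.symm, hfreshB p (hPB hp)]) hmp
    (by simpa only [deleteIncidenceSet_rootedSubgraph] using h.coeff_ne_zero)
  rw [add_assoc, add_assoc] at hcoeff
  by_cases hpay : u ∈ freshNeighbors G W B v ∧ u ∉ Y
  · refine ⟨_, _, _, h.extend (S₀ := {u}) (Y₀ := {v}) (hBW hvB) hPB hcoeff
      (singleton_subset_iff.2 hpay.1) (disjoint_singleton_left.2 hpay.2)
      (by simpa using hvP) le_rfl ?_ ?_ ?_ ?_ ?_⟩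
    all_goals
      simp only [Finsupp.add_apply, oneOn_apply, Finsupp.single_apply]
      grind
  · refine ⟨_, _, _, h.extend (S₀ := ∅) (Y₀ := ∅) (hBW hvB) hPB hcoeff (empty_subset _)
      (disjoint_empty_left _) (empty_subset _) le_rfl ?_ ?_ ?_ ?_ ?_⟩
    all_goals
      simp only [Finsupp.add_apply, oneOn_apply, Finsupp.single_apply]
      grind

lemma mono_boundary_of_singleton {B' : Finset V} (hB : B' ⊆ B) (h : HasCertificate G W B {p}) :
    HasCertificate G W B' ∅ := by
  obtain ⟨S, Y, m, h⟩ := h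
  refine ⟨S, Y, m, h.subset_left.trans (sdiff_subset_sdiff subset_rfl hB),
    h.subset_right.trans (sdiff_subset_sdiff subset_rfl (empty_subset _)), h.disjoint, h.card_le,
    ?_, by simp, fun v hv => h.apply_boundary v (hB hv), h.apply_le⟩
  rw [← rootedSubgraph_singleton G W p]
  exact h.coeff_ne_zero

lemma empty (G : SimpleGraph V) : HasCertificate G ∅ ∅ ∅ := by
  have hbot : rootedSubgraph G ∅ ∅ = ⊥ := by
    ext a b
    simp [rootedSubgraph_adj]
  refine ⟨∅, ∅, 0, empty_subset _, empty_subset _, disjoint_empty_left _, le_rfl, ?_, ?_, ?_, ?_⟩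
  · simp [hbot, graphPoly]
  all_goals simp

end HasCertificate

end Certificates

section Separations

/-- A separation of `W` with separator `T`: no edge of `G` joins the sides `C` and `D`. -/
structure IsSeparation {V : Type*} [DecidableEq V] (G : SimpleGraph V) (W C D T : Finset V) :
    Prop where
  union_eq : C ∪ D ∪ T = W
  disjoint : Disjoint C D
  disjoint_left : Disjoint C T
  disjoint_right : Disjoint D T
  not_adj : ∀ c ∈ C, ∀ d ∈ D, ¬ G.Adj c d

namespace IsSeparation

section

variable {V : Type*} [DecidableEq V] {G : SimpleGraph V} {W C D P T : Finset V}

lemma symm (h : IsSeparation G W C D T) : IsSeparation G W D C T :=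
  ⟨by rw [union_comm D C, h.union_eq], h.disjoint.symm, h.disjoint_right, h.disjoint_left,
    fun d hd c hc hdc => h.not_adj c hc d hd hdc.symm⟩

lemma subset_or_subset_of_isClique (h : IsSeparation G W C D T) (hP : G.IsClique P)
    (hPW : P ⊆ W) : P ⊆ D ∪ T ∨ P ⊆ C ∪ T := by
  by_contra! hsplit
  obtain ⟨⟨c, hcP, hc⟩, ⟨d, hdP, hd⟩⟩ := hsplit.imp not_subset.1 not_subset.1
  have hcW : c ∈ C ∪ D ∪ T := h.union_eq ▸ hPW hcP
  have hdW : d ∈ C ∪ D ∪ T := h.union_eq ▸ hPW hdP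
  simp only [mem_union, not_or] at hc hd hcW hdW
  have hcC : c ∈ C := by tauto
  have hdD : d ∈ D := by tauto
  have hcd : c ≠ d := fun hcd => hd.1 (hcd ▸ hcC)
  exact h.not_adj c hcC d hdD (hP hcP hdP hcd)

lemma right_ssubset (h : IsSeparation G W C D T) (hC : C.Nonempty) : D ∪ T ⊂ W := by
  obtain ⟨c, hc⟩ := hC
  have hcD := Finset.disjoint_left.1 h.disjoint hc
  have hcT := Finset.disjoint_left.1 h.disjoint_left hc
  rw [← h.union_eq, union_assoc]
  exact (Finset.ssubset_iff_of_subset subset_union_right).2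
    ⟨c, mem_union_left _ hc, by simp [hcD, hcT]⟩

lemma rootedSubgraph_eq_sup (h : IsSeparation G W C D T) (hP : P ⊆ D ∪ T) :
    rootedSubgraph G W P = rootedSubgraph G (D ∪ T) P ⊔ rootedSubgraph G (C ∪ T) T := by
  have hCD : ∀ u ∈ C, u ∉ D ∧ u ∉ T := fun u hu =>
    ⟨Finset.disjoint_left.1 h.disjoint hu, Finset.disjoint_left.1 h.disjoint_left hu⟩
  have hPC : ∀ u ∈ P, u ∉ C := fun u hu => by
    have := hP hu
    grind
  ext a b
  have hab := h.not_adj a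
  have hba := h.symm.not_adj a
  rw [SimpleGraph.sup_adj, rootedSubgraph_adj, rootedSubgraph_adj, rootedSubgraph_adj,
    ← h.union_eq]
  by_cases hadj : G.Adj a b <;> grind

lemma disjoint_rootedSubgraph (h : IsSeparation G W C D T) (P : Finset V) :
    Disjoint (rootedSubgraph G (D ∪ T) P) (rootedSubgraph G (C ∪ T) T) := by
  have hCD : ∀ u ∈ C, u ∉ D := fun u hu => Finset.disjoint_left.1 h.disjoint hu
  refine SimpleGraph.disjoint_left.2 fun a b hab hab' => ?_
  rw [rootedSubgraph_adj] at hab hab'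
  grind

end

variable {V : Type*} [Fintype V] [LinearOrder V] {G : SimpleGraph V} {W B C D P T : Finset V}

lemma coeff_graphPoly_ne_zero {m₁ m₂ : V →₀ ℕ} (h : IsSeparation G W C D T) (hP : P ⊆ D ∪ T)
    (h₁ : coeff m₁ (graphPoly (rootedSubgraph G (D ∪ T) P)) ≠ 0)
    (h₂ : coeff m₂ (graphPoly (rootedSubgraph G (C ∪ T) T)) ≠ 0) (hm₂ : ∀ v ∈ D ∪ T, m₂ v = 0) :
    coeff (m₁ + m₂) (graphPoly (rootedSubgraph G W P)) ≠ 0 := by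
  rw [h.rootedSubgraph_eq_sup hP, graphPoly_sup (h.disjoint_rootedSubgraph P),
    coeff_add_mul_of_isHomogeneous (graphPoly_isHomogeneous_degree h₁)]
  · exact mul_ne_zero h₁ h₂
  · intro v hv
    by_contra hm₂v
    exact notMem_vars_graphPoly (fun _ hadj => hm₂v (hm₂ v (rootedSubgraph_adj.1 hadj).2.1.1)) hv

lemma hasCertificate (h : IsSeparation G W C D T) (hP : P ⊆ D ∪ T) (hTB : T ⊆ B) (hBW : B ⊆ W)
    (hD : HasCertificate G (D ∪ T) (B ∩ (D ∪ T)) P)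
    (hC : HasCertificate G (C ∪ T) (B ∩ (C ∪ T)) T) : HasCertificate G W B P := by
  obtain ⟨S₁, Y₁, m₁, h₁⟩ := hD
  obtain ⟨S₂, Y₂, m₂, h₂⟩ := hC
  have hW : ∀ u, u ∈ W ↔ u ∈ C ∨ u ∈ D ∪ T := fun u => by rw [← h.union_eq, union_assoc, mem_union]
  have hCDT : ∀ u ∈ C, u ∉ D ∪ T := fun u hu => by
    simp [Finset.disjoint_left.1 h.disjoint hu, Finset.disjoint_left.1 h.disjoint_left hu]
  have hm₁ : ∀ u ∈ C, m₁ u = 0 := fun u hu => h₁.apply_eq_zero (hCDT u hu)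
  have hm₂ : ∀ u ∉ C, m₂ u = 0 := fun u hu => by
    by_cases huT : u ∈ T
    · exact h₂.apply_root u huT
    · exact h₂.apply_eq_zero (by simp [hu, huT])
  obtain ⟨hS₁, hY₁⟩ := And.intro h₁.subset_left h₁.subset_right
  obtain ⟨hS₂, hY₂⟩ := And.intro h₂.subset_left h₂.subset_right
  refine ⟨S₁ ∪ S₂, Y₁ ∪ Y₂, m₁ + m₂, by grind, by grind, ?_, ?_, h.coeff_graphPoly_ne_zero hP
    h₁.coeff_ne_zero h₂.coeff_ne_zero fun v hv => hm₂ v fun hvC => hCDT v hvC hv, ?_, ?_, ?_⟩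
  · have := Finset.disjoint_left.1 h₁.disjoint
    have := Finset.disjoint_left.1 h₂.disjoint
    exact Finset.disjoint_left.2 fun u huS huY => by grind
  · have hY : Disjoint Y₁ Y₂ := Finset.disjoint_left.2 fun u hu hu' => by grind
    rw [card_union_of_disjoint hY]
    exact (card_union_le S₁ S₂).trans (add_le_add h₁.card_le h₂.card_le)
  · intro u hu
    rw [Finsupp.add_apply, h₁.apply_root u hu, hm₂ u fun huC => hCDT u huC (hP hu)]
  · intro u hu
    have := h₁.apply_boundary u
    have := h₂.apply_boundary u
    have := hBW hu
    rw [Finsupp.add_apply]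
    by_cases huC : u ∈ C <;> grind
  · intro u
    have := h₁.apply_le u
    have := h₂.apply_le u
    rw [Finsupp.add_apply]
    by_cases huC : u ∈ C <;> grind

end IsSeparation

lemma exists_isSeparation {V : Type*} [DecidableEq V] {G : SimpleGraph V} {W T : Finset V}
    (hTW : T ⊆ W) {a b : V} (ha : a ∈ W \ T) (hb : b ∈ W \ T)
    (hab : ¬ ReachableIn G ↑(W \ T) a b) :
    ∃ C D : Finset V, C.Nonempty ∧ D.Nonempty ∧ IsSeparation G W C D T := by
  classical
  let C := {u ∈ W \ T | ReachableIn G ↑(W \ T) a u}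
  have hCW : C ⊆ W \ T := filter_subset _ _
  refine ⟨C, (W \ T) \ C, ⟨a, mem_filter.2 ⟨ha, .refl ha⟩⟩,
    ⟨b, mem_sdiff.2 ⟨hb, fun hbC => hab (mem_filter.1 hbC).2⟩⟩, ?_, disjoint_sdiff,
    disjoint_sdiff_self_left.mono_left hCW, disjoint_sdiff_self_left.mono_left sdiff_subset, ?_⟩
  · rw [union_sdiff_of_subset hCW, sdiff_union_of_subset hTW]
  · intro c hc d hd hcd
    rw [mem_sdiff] at hd
    exact hd.2 (mem_filter.2 ⟨hd.1, (mem_filter.1 hc).2.trans_adj hcd hd.1⟩)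

end Separations

section RootedRegions

/-- The inductive situation: `A` is a set of deleted vertices, `W` is a part of what remains, and
the roots `P` form a clique in the boundary of `W`. Contracting `A` makes the boundary of `W` the
neighbourhood of one vertex, which takes the place of the outer face of a plane graph. -/
structure IsRootedRegion {V : Type*} (G : SimpleGraph V) (A : Set V) (W P : Finset V) : Prop where
  preconnected : (G.induce A).Preconnected
  disjoint : Disjoint A W
  subset_boundary : P ⊆ boundary G A W
  isClique : G.IsClique P

section

variable {V : Type*} [DecidableEq V] {G : SimpleGraph V} {A : Set V} {W P : Finset V} {v : V}

lemma isRootedRegion_singleton (G : SimpleGraph V) (W : Finset V) (v : V) :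
    IsRootedRegion G {v} (W.erase v) ∅ :=
  ⟨(connected_induce_singleton G v).preconnected, by simp, empty_subset _, by simp⟩

lemma IsRootedRegion.erase (h : IsRootedRegion G A W P) (hv : v ∈ boundary G A W) :
    IsRootedRegion G (insert v A) (W.erase v) (P.erase v) where
  preconnected := by
    rw [← Set.union_singleton]
    exact ((mem_boundary.1 hv).2.connected_union h.preconnected
      (connected_induce_singleton G v).preconnected).preconnected
  disjoint := by
    rw [Set.disjoint_insert_left, coe_erase]
    exact ⟨by simp, h.disjoint.mono_right Set.sdiff_subset⟩
  subset_boundary := by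
    rw [boundary_insert_erase]
    exact erase_subset_erase v (h.subset_boundary.trans subset_union_left)
  isClique := h.isClique.subset (by simp)

lemma exists_isSeparation_of_isPlanar (hG : G.IsPlanar) (hA : (G.induce A).Preconnected)
    (hAW : Disjoint A W) (hv : v ∈ boundary G A W) {r : Fin 3 → V} (hr : Function.Injective r)
    (hrB : ∀ i, r i ∈ boundary G A W) (hvr : ∀ i, G.Adj v (r i)) :
    ∃ i, ∃ C D : Finset V, C.Nonempty ∧ D.Nonempty ∧ IsSeparation G W C D {v, r i} := by
  by_contra! hsep
  simp only [mem_boundary] at hv hrB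
  have hA_nonempty : Nonempty A := let ⟨a, ha, _⟩ := hv.2; ⟨⟨a, ha⟩⟩
  refine not_isPlanar_of_reachableIn (T := ↑W \ {v}) hr ⟨hA⟩ (hAW.mono_right Set.sdiff_subset)
    (fun hvA => Set.disjoint_left.1 hAW hvA hv.1) (by simp)
    (fun i => ⟨(hrB i).1, (hvr i).ne'⟩) hv.2 (fun i => (hrB i).2) hvr (fun i => ?_) hG
  by_contra hreach
  have hi : i ≠ i + 2 ∧ i + 1 ≠ i + 2 := by lia
  have hmem (j : Fin 3) (hj : j ≠ i + 2) : r j ∈ W \ {v, r (i + 2)} := by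
    simp [(hrB j).1, (hvr j).ne', hr.ne hj]
  have hT : {v, r (i + 2)} ⊆ W := by simp [insert_subset_iff, hv.1, (hrB (i + 2)).1]
  obtain ⟨C, D, hC, hD, hCD⟩ := exists_isSeparation hT (hmem i hi.1) (hmem (i + 1) hi.2)
    (by simpa [Set.sdiff_sdiff, Set.pair_comm] using hreach)
  exact hsep _ C D hC hD hCD

end

variable {V : Type*} [Fintype V] [LinearOrder V] {G : SimpleGraph V} {A : Set V}
  {W C D P T : Finset V} {p : V}

lemma IsRootedRegion.hasCertificate_of_isSeparation (h : IsRootedRegion G A W P)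
    (hCD : IsSeparation G W C D T) (hC : C.Nonempty) (hD : D.Nonempty) (hPD : P ⊆ D ∪ T)
    (hTB : T ⊆ boundary G A W) (hT : G.IsClique T)
    (ih : ∀ W' ⊂ W, ∀ P', IsRootedRegion G A W' P' → HasCertificate G W' (boundary G A W') P') :
    HasCertificate G W (boundary G A W) P := by
  have side {W' P' : Finset V} (hW' : W' ⊂ W) (hP' : P' ⊆ boundary G A W ∩ W')
      (hclique : G.IsClique P') : HasCertificate G W' (boundary G A W ∩ W') P' := by
    rw [boundary_inter_of_subset hW'.subset] at hP' ⊢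
    exact ih W' hW' P' ⟨h.preconnected, h.disjoint.mono_right (coe_subset.2 hW'.subset), hP',
      hclique⟩
  exact hCD.hasCertificate hPD hTB (boundary_subset G A W)
    (side (hCD.right_ssubset hC) (subset_inter h.subset_boundary hPD) h.isClique)
    (side (hCD.symm.right_ssubset hD) (subset_inter hTB subset_union_right) hT)

lemma IsRootedRegion.hasCertificate_of_claw (hG : G.IsPlanar) (h : IsRootedRegion G A W P) {v : V}
    (hv : v ∈ boundary G A W) {r : Fin 3 → V} (hr : Function.Injective r)
    (hrB : ∀ i, r i ∈ boundary G A W) (hvr : ∀ i, G.Adj v (r i))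
    (ih : ∀ W' ⊂ W, ∀ P', IsRootedRegion G A W' P' → HasCertificate G W' (boundary G A W') P') :
    HasCertificate G W (boundary G A W) P := by
  obtain ⟨i, C, D, hC, hD, hCD⟩ :=
    exists_isSeparation_of_isPlanar hG h.preconnected h.disjoint hv hr hrB hvr
  have hTB : {v, r i} ⊆ boundary G A W := insert_subset hv (singleton_subset_iff.2 (hrB i))
  have hT : G.IsClique ↑({v, r i} : Finset V) := by
    simpa using fun _ => hvr i
  rcases hCD.subset_or_subset_of_isClique h.isClique
    (h.subset_boundary.trans (boundary_subset G A W)) with hP | hP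
  · exact h.hasCertificate_of_isSeparation hCD hC hD hP hTB hT ih
  · exact h.hasCertificate_of_isSeparation hCD.symm hD hC hP hTB hT ih

lemma IsRootedRegion.hasCertificate_of_adj (hG : G.IsPlanar) (h : IsRootedRegion G A W P)
    (hp : p ∈ P) {v : V} (hv : v ∈ boundary G A W) (hvP : v ∉ P) (hpv : G.Adj p v)
    (ih : ∀ W' ⊂ W, ∀ A' P', IsRootedRegion G A' W' P' →
      HasCertificate G W' (boundary G A' W') P') :
    HasCertificate G W (boundary G A W) P := by
  have hBW := boundary_subset G A W
  have hdelete : HasCertificate G (W.erase v)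
      ((boundary G A W ∪ freshNeighbors G W (boundary G A W) v).erase v) P := by
    have := ih _ (erase_ssubset (hBW hv)) _ _ (h.erase hv)
    rwa [boundary_insert_erase, erase_eq_of_notMem hvP] at this
  by_cases hx : ∃ x ∈ boundary G A W, G.Adj v x ∧ x ≠ p
  swap
  · refine .of_delete_vertex_of_unique hp h.subset_boundary hBW hv hvP (fun u hu => ?_) hdelete
    exact ⟨fun hvu => of_not_not fun hup => hx ⟨u, hu, hvu, hup⟩, fun hup => hup ▸ hpv.symm⟩
  obtain ⟨x, hxB, hvx, hxp⟩ := hx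
  by_cases hy : ∃ y ∈ boundary G A W, G.Adj v y ∧ y ≠ p ∧ y ≠ x
  swap
  · refine .of_delete_vertex_of_pair hp h.subset_boundary hBW hv hvP hxB hxp (fun u hu => ?_)
      hdelete
    refine ⟨fun hvu => ?_, ?_⟩
    · by_contra! hu'
      exact hy ⟨u, hu, hvu, hu'⟩
    · rintro (rfl | rfl)
      exacts [hpv.symm, hvx]
  obtain ⟨y, hyB, hvy, hyp, hyx⟩ := hy
  refine h.hasCertificate_of_claw hG hv (r := ![p, x, y]) ?_ ?_ ?_ fun W' hW' => ih W' hW' A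
  · simp [Function.Injective, Fin.forall_fin_succ, hxp, hyp, hyx, hxp.symm, hyp.symm, hyx.symm]
  · simp [Fin.forall_fin_succ, h.subset_boundary hp, hxB, hyB]
  · simp [Fin.forall_fin_succ, hpv.symm, hvx, hvy]

lemma IsRootedRegion.hasCertificate_of_mem (hG : G.IsPlanar) (h : IsRootedRegion G A W P)
    (hp : p ∈ P) (ih : ∀ W' ⊂ W, ∀ A' P', IsRootedRegion G A' W' P' →
      HasCertificate G W' (boundary G A' W') P') :
    HasCertificate G W (boundary G A W) P := by
  by_cases hBP : ∀ u ∈ boundary G A W, G.Adj p u → u ∈ P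
  · have hpB := h.subset_boundary hp
    have := ih _ (erase_ssubset (boundary_subset G A W hpB)) _ _ (h.erase hpB)
    rw [boundary_insert_erase] at this
    exact .of_delete_root hp h.subset_boundary (boundary_subset G A W) hBP this
  · push Not at hBP
    obtain ⟨v, hv, hpv, hvP⟩ := hBP
    exact h.hasCertificate_of_adj hG hp hv hvP hpv ih

lemma HasCertificate.of_boundary_singleton_erase {v : V} (hv : v ∈ W)
    (h : HasCertificate G (W.erase v) (boundary G {v} (W.erase v)) ∅) :
    HasCertificate G W {v} {v} := by
  refine .of_delete_root (mem_singleton_self v) subset_rfl (singleton_subset_iff.2 hv) ?_ ?_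
  · exact fun u hu _ => hu
  · rwa [← boundary_singleton_erase, erase_singleton]

theorem IsRootedRegion.hasCertificate (hG : G.IsPlanar) (h : IsRootedRegion G A W P) :
    HasCertificate G W (boundary G A W) P := by
  induction W using Finset.strongInduction generalizing A P with | H W ih
  rcases P.eq_empty_or_nonempty with rfl | ⟨p, hp⟩
  swap
  · exact h.hasCertificate_of_mem hG hp fun W' hW' _ _ => ih W' hW'
  rcases (boundary G A W).eq_empty_or_nonempty with hB | ⟨p, hp⟩
  swap
  · have hroot : IsRootedRegion G A W {p} :=
      ⟨h.preconnected, h.disjoint, singleton_subset_iff.2 hp, by simp⟩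
    exact (hroot.hasCertificate_of_mem hG (mem_singleton_self p) fun W' hW' _ _ =>
      ih W' hW').mono_boundary_of_singleton subset_rfl
  rw [hB]
  rcases W.eq_empty_or_nonempty with rfl | ⟨v, hv⟩
  · exact .empty G
  · exact (HasCertificate.of_boundary_singleton_erase hv <|
      ih _ (erase_ssubset hv) (isRootedRegion_singleton G W v)).mono_boundary_of_singleton
        (empty_subset _)

end RootedRegions

theorem exists_coeff_graphPoly_ne_zero_of_isPlanar {V : Type*} [Fintype V] [LinearOrder V]
    [Nonempty V] {G : SimpleGraph V} (hG : G.IsPlanar) :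
    ∃ (S : Finset V) (m : V →₀ ℕ), 2 * #S < Fintype.card V ∧ coeff m (graphPoly G) ≠ 0 ∧
      ∀ v, m v ≤ 4 ∧ (v ∉ S → m v ≤ 3) := by
  obtain ⟨v⟩ := ‹Nonempty V›
  obtain ⟨S, Y, m, h⟩ : HasCertificate G univ {v} {v} :=
    .of_boundary_singleton_erase (mem_univ v) <|
      (isRootedRegion_singleton G univ v).hasCertificate hG
  refine ⟨S, m, ?_, ?_, h.apply_le⟩
  · have hlt : #(S ∪ Y) < #(univ : Finset V) := card_lt_card <|
      (union_subset h.subset_left h.subset_right).trans_ssubset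
        (sdiff_ssubset (subset_univ _) (singleton_nonempty v))
    rw [card_union_of_disjoint h.disjoint, card_univ] at hlt
    have := h.card_le
    omega
  · simpa only [rootedSubgraph_singleton, rootedSubgraph_univ_empty] using h.coeff_ne_zero

theorem stmt_14_general {V : Type*} [Fintype V] [Nonempty V] {G : SimpleGraph V}
    (hG : G.IsPlanar) :
    ∃ X : Finset V, 2 * #X < Fintype.card V ∧
      ∀ {α : Type*} (L : V → Finset α), (∀ v ∈ X, 5 ≤ #(L v)) → (∀ v ∉ X, 4 ≤ #(L v)) →
        ∃ φ : V → α, (∀ v, φ v ∈ L v) ∧ ∀ u v, G.Adj u v → φ u ≠ φ v := by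
  classical
  let _ : LinearOrder V := linearOrderOfSTO WellOrderingRel
  obtain ⟨X, m, hX, hcoeff, hm⟩ := exists_coeff_graphPoly_ne_zero_of_isPlanar hG
  refine ⟨X, hX, fun L h₅ h₄ => exists_listColoring hcoeff fun v => ?_⟩
  by_cases hv : v ∈ X
  · exact (hm v).1.trans_lt (h₅ v hv)
  · exact ((hm v).2 hv).trans_lt (h₄ v hv)

/- Every planar graph has a vertex set `X` with `|X| < |V|/2` such that `G` is
`L`-colourable whenever `L` gives five colours to vertices of `X` and four to the rest. -/
theorem stmt_14 {V : Type*} [Fintype V] [LinearOrder V] [Nonempty V]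
    (G : SimpleGraph V) (hG : G.IsPlanar) :
    ∃ X : Finset V, 2 * X.card < Fintype.card V ∧
      ∀ L : V → Finset ℕ,
        (∀ v ∈ X, (L v).card = 5) → (∀ v ∉ X, (L v).card = 4) →
        ∃ φ : V → ℕ, (∀ v, φ v ∈ L v) ∧ ∀ u v, G.Adj u v → φ u ≠ φ v := by
  obtain ⟨X, hX, hL⟩ := stmt_14_general hG
  exact ⟨X, hX, fun L h₅ h₄ => hL L (fun v hv => (h₅ v hv).ge) fun v hv => (h₄ v hv).ge⟩
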